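/- arXiv:2302.03281 — 5 statements merged into one kernel-verified Lean document; each statement's English description precedes it below -/
import Mathlib

section
/- Let f : (Fin m → ℝ) → ℝ, h : Fin n → ℝ, W : Matrix (Fin m) (Fin n) ℝ, i : Fin m, j : Fin n. Define the weight slice ψ : ℝ → ℝ by ψ t = f ((W.updateRow i (Function.update (W i) j t)).mulVec h). Suppose f is three times continuously differentiable and iteratedDeriv 3 ψ is identically zero. Then f ((W.updateRow i (Function.update (W i) j 0)).mulVec h) - f (W.mulVec h) = -((fderiv ℝ f (W.mulVec h)) (Pi.single i 1)) * (h j) * (W i j) + (1/2) * ((fderiv ℝ (fun x => (fderiv ℝ f x) (Pi.single i 1)) (W.mulVec h)) (Pi.single i 1)) * (h j)^2 * (W i j)^2. -/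
/-!
The activation inputs depend affinely on a single weight `t`, with velocity `h j • Pi.single i 1`.
By the chain rule the first two derivatives of the weight slice are the directional derivatives of
`f` in direction `Pi.single i 1`, scaled by `h j` and `(h j) ^ 2`. As the third derivative
vanishes, the Lagrange remainder does too, so the slice equals its second-order Taylor polynomial at
`W i j`, which is then evaluated at `0`.
-/

open Set Filter Matrix Topology
open scoped Nat

section ChainRule

variable {𝕜 E F : Type*} [NontriviallyNormedField 𝕜] [NormedAddCommGroup E] [NormedSpace 𝕜 E]
  [NormedAddCommGroup F] [NormedSpace 𝕜 F] {f : E → F} {c : 𝕜 → E} {a t : 𝕜} {v : E}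

lemma deriv_comp_of_hasDerivAt_smul (hc : HasDerivAt c (a • v) t)
    (hf : DifferentiableAt 𝕜 f (c t)) :
    deriv (fun s ↦ f (c s)) t = a • fderiv 𝕜 f (c t) v := by
  rw [← map_smul]
  exact (hf.hasFDerivAt.comp_hasDerivAt t hc).deriv

lemma iteratedDeriv_two_comp_of_hasDerivAt_smul (hc : ∀ᶠ s in 𝓝 t, HasDerivAt c (a • v) s)
    (hf : ContDiffAt 𝕜 2 f (c t)) :
    iteratedDeriv 2 (fun s ↦ f (c s)) t =
      a ^ 2 • fderiv 𝕜 (fun x ↦ fderiv 𝕜 f x v) (c t) v := by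
  have hct : HasDerivAt c (a • v) t := hc.self_of_nhds
  have h_first : deriv (fun s ↦ f (c s)) =ᶠ[𝓝 t] fun s ↦ a • fderiv 𝕜 f (c s) v := by
    filter_upwards [hc, hct.continuousAt.eventually (hf.eventually (by simp))] with s hcs hfs
    exact deriv_comp_of_hasDerivAt_smul hcs (hfs.differentiableAt two_ne_zero)
  have h_dir : DifferentiableAt 𝕜 (fun x ↦ fderiv 𝕜 f x v) (c t) :=
    ((hf.fderiv_right (m := 1) (by norm_num)).differentiableAt one_ne_zero).clm_apply
      (differentiableAt_const v)
  calc iteratedDeriv 2 (fun s ↦ f (c s)) t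
      = deriv (fun s ↦ a • fderiv 𝕜 f (c s) v) t := by
        rw [iteratedDeriv_succ, iteratedDeriv_one, h_first.deriv_eq]
    _ = a • deriv (fun s ↦ fderiv 𝕜 f (c s) v) t :=
        deriv_fun_const_smul a (h_dir.comp t hct.differentiableAt)
    _ = a ^ 2 • fderiv 𝕜 (fun x ↦ fderiv 𝕜 f x v) (c t) v := by
        rw [deriv_comp_of_hasDerivAt_smul hct h_dir, smul_smul, sq]

end ChainRule

lemma eq_sum_of_iteratedDeriv_succ_eq_zero {ψ : ℝ → ℝ} {x₀ x : ℝ} {n : ℕ}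
    (hψ : ContDiffOn ℝ (n + 1) ψ (uIcc x₀ x)) (hψ₀ : ContDiffAt ℝ n ψ x₀)
    (h_zero : ∀ t ∈ uIoo x₀ x, iteratedDeriv (n + 1) ψ t = 0) :
    ψ x = ∑ k ∈ Finset.range (n + 1), (k ! : ℝ)⁻¹ * (x - x₀) ^ k * iteratedDeriv k ψ x₀ := by
  rcases eq_or_ne x₀ x with rfl | hx
  · simp [Finset.sum_range_succ']
  obtain ⟨t, ht, h_rem⟩ := taylor_mean_remainder_lagrange_iteratedDeriv hx hψ
  rw [h_zero t ht, zero_mul, zero_div, sub_eq_zero, taylor_within_apply] at h_rem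
  refine h_rem.trans (Finset.sum_congr rfl fun k hk ↦ ?_)
  have hkn : k ≤ n := Finset.mem_range_succ_iff.mp hk
  rw [smul_eq_mul, iteratedDerivWithin_eq_iteratedDeriv (uniqueDiffOn_uIcc hx)
    (hψ₀.of_le (mod_cast hkn)) left_mem_uIcc]

section ActivationSlice

variable {ι κ : Type*} [Fintype κ] [DecidableEq ι] [DecidableEq κ]

/-- The activation inputs of the linear layer `W` at the activation output `h`, as a function of the
value `t` given to the weight `W i j`. The paper's weight slice is the loss composed with it. -/
def activationSlice {R : Type*} [NonUnitalNonAssocSemiring R] (W : Matrix ι κ R) (h : κ → R)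
    (i : ι) (j : κ) (t : R) : ι → R :=
  W.updateRow i (Function.update (W i) j t) *ᵥ h

lemma activationSlice_eq_add_smul_single {R : Type*} [NonAssocRing R] (W : Matrix ι κ R) (h : κ → R)
    (i : ι) (j : κ) (t : R) :
    activationSlice W h i j t = W *ᵥ h + (t - W i j) • h j • Pi.single i 1 := by
  have h_row : Function.update (W i) j t = W i + Pi.single j (t - W i j) := by
    ext k
    obtain rfl | hk := eq_or_ne k j <;> simp [*]
  rw [activationSlice, updateRow_mulVec, h_row, add_dotProduct, single_dotProduct]
  ext k
  obtain rfl | hk := eq_or_ne k i <;> simp [mulVec, *]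

lemma activationSlice_self {R : Type*} [NonUnitalNonAssocSemiring R] (W : Matrix ι κ R) (h : κ → R)
    (i : ι) (j : κ) : activationSlice W h i j (W i j) = W *ᵥ h := by
  simp [activationSlice]

variable {𝕜 : Type*} [NontriviallyNormedField 𝕜]

lemma contDiff_activationSlice [Fintype ι] (W : Matrix ι κ 𝕜) (h : κ → 𝕜) (i : ι) (j : κ)
    {n : WithTop ℕ∞} : ContDiff 𝕜 n (activationSlice W h i j) := by
  simp only [funext (activationSlice_eq_add_smul_single W h i j)]
  fun_prop

lemma hasDerivAt_activationSlice [Finite ι] (W : Matrix ι κ 𝕜) (h : κ → 𝕜) (i : ι) (j : κ)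
    (t : 𝕜) : HasDerivAt (activationSlice W h i j) (h j • Pi.single i 1) t := by
  cases nonempty_fintype ι
  simp only [funext (activationSlice_eq_add_smul_single W h i j)]
  simpa using (((hasDerivAt_id t).sub_const (W i j)).smul_const
    (h j • Pi.single i (1 : 𝕜))).const_add (W *ᵥ h)

end ActivationSlice

theorem weight_utility_linear_layer_general {ι κ : Type*} [Fintype ι] [Fintype κ] [DecidableEq ι]
    [DecidableEq κ] (f : (ι → ℝ) → ℝ) (h : κ → ℝ) (W : Matrix ι κ ℝ) (i : ι) (j : κ)
    (hf : ∀ t ∈ uIcc (W i j) 0, ContDiffAt ℝ 3 f (activationSlice W h i j t))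
    (h3 : ∀ t ∈ uIoo (W i j) 0, iteratedDeriv 3 (fun s ↦ f (activationSlice W h i j s)) t = 0) :
    f (activationSlice W h i j 0) - f (W *ᵥ h) =
      -(fderiv ℝ f (W *ᵥ h) (Pi.single i 1)) * h j * W i j
        + (1 / 2) * fderiv ℝ (fun x ↦ fderiv ℝ f x (Pi.single i 1)) (W *ᵥ h) (Pi.single i 1)
          * h j ^ 2 * W i j ^ 2 := by
  have hψ : ∀ t ∈ uIcc (W i j) 0, ContDiffAt ℝ 3 (fun s ↦ f (activationSlice W h i j s)) t :=
    fun t ht ↦ (hf t ht).comp t (contDiff_activationSlice W h i j).contDiffAt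
  have h_taylor := eq_sum_of_iteratedDeriv_succ_eq_zero (n := 2)
    (fun t ht ↦ (hψ t ht).contDiffWithinAt) ((hψ _ left_mem_uIcc).of_le (by norm_num)) h3
  have hf₀ : ContDiffAt ℝ 3 f (activationSlice W h i j (W i j)) := hf _ left_mem_uIcc
  have h_deriv := deriv_comp_of_hasDerivAt_smul (hasDerivAt_activationSlice W h i j (W i j))
    (hf₀.differentiableAt three_ne_zero)
  have h_deriv₂ := iteratedDeriv_two_comp_of_hasDerivAt_smul
    (.of_forall (hasDerivAt_activationSlice W h i j)) (hf₀.of_le (by norm_num))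
  simp only [Finset.sum_range_succ, Finset.sum_range_zero, iteratedDeriv_zero, iteratedDeriv_one,
    h_deriv, h_deriv₂, activationSlice_self, smul_eq_mul, Nat.factorial] at h_taylor
  push_cast at h_taylor
  linear_combination h_taylor

theorem weight_utility_linear_layer (m n : ℕ) (f : (Fin m → ℝ) → ℝ) (h : Fin n → ℝ)
    (W : Matrix (Fin m) (Fin n) ℝ) (i : Fin m) (j : Fin n)
    (hf : ContDiff ℝ 3 f)
    (h3 : ∀ t : ℝ, iteratedDeriv 3
      (fun t : ℝ => f ((W.updateRow i (Function.update (W i) j t)).mulVec h)) t = 0) :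
    f ((W.updateRow i (Function.update (W i) j 0)).mulVec h) - f (W.mulVec h) =
      -((fderiv ℝ f (W.mulVec h)) (Pi.single i 1)) * (h j) * (W i j)
        + (1/2) * ((fderiv ℝ (fun x => (fderiv ℝ f x) (Pi.single i 1)) (W.mulVec h))
            (Pi.single i 1)) * (h j)^2 * (W i j)^2 :=
  weight_utility_linear_layer_general f h W i j (fun _ _ ↦ hf.contDiffAt) fun t _ ↦ h3 t
end

section
/- Let f : (Fin m → ℝ) → ℝ be differentiable, σ : ℝ → ℝ be differentiable, and W : Matrix (Fin m) (Fin n) ℝ. Define g : (Fin n → ℝ) → ℝ by g a = f (W.mulVec (fun i => σ (a i))). Then for every a : Fin n → ℝ and i : Fin n, deriv (fun t => g (Function.update a i t)) (a i) = ∑ k : Fin m, ((fderiv ℝ f (W.mulVec (fun i' => σ (a i')))) (Pi.single k 1)) * (W k i) * (deriv σ (a i)). -/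
theorem map_eq_sum_smul_map_single {R ι M F : Type*} [Semiring R] [AddCommMonoid M] [Module R M]
    [Fintype ι] [DecidableEq ι] [FunLike F (ι → R) M] [LinearMapClass F R (ι → R) M]
    (L : F) (x : ι → R) : L x = ∑ i, x i • L (Pi.single i 1) := by
  conv_lhs => rw [← Finset.univ_sum_single x, map_sum]
  refine Finset.sum_congr rfl fun i _ ↦ ?_
  rw [← map_smul, ← Pi.single_smul, smul_eq_mul, mul_one]

section Layer

open scoped Matrix

variable {𝕜 ι κ : Type*} [NontriviallyNormedField 𝕜]

theorem hasDerivAt_comp_update {E : Type*} [NormedAddCommGroup E] [NormedSpace 𝕜 E] [DecidableEq ι]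
    {σ : 𝕜 → E} {σ' : E} {a : ι → 𝕜} {i : ι} (hσ : HasDerivAt σ σ' (a i)) :
    HasDerivAt (fun t ↦ σ ∘ Function.update a i t) (Pi.single i σ') (a i) := by
  refine hasDerivAt_pi.2 fun j ↦ ?_
  obtain rfl | hji := eq_or_ne j i
  · simpa only [Function.comp_apply, Function.update_self, Pi.single_eq_same] using hσ
  · simpa only [Function.comp_apply, Function.update_of_ne hji, Pi.single_eq_of_ne hji] using
      hasDerivAt_const (a i) (σ (a j))

theorem hasDerivAt_const_mulVec {R : Type*} [NormedRing R] [NormedAlgebra 𝕜 R] [Fintype ι]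
    (W : Matrix κ ι R) {v : 𝕜 → ι → R} {v' : ι → R} {t : 𝕜} (hv : HasDerivAt v v' t) :
    HasDerivAt (fun s ↦ W *ᵥ v s) (W *ᵥ v') t :=
  hasDerivAt_pi.2 fun k ↦
    HasDerivAt.fun_sum fun j _ ↦ (hasDerivAt_pi.1 hv j).const_mul (W k j)

theorem backprop_activation_input_general [Fintype ι] [DecidableEq ι] [Fintype κ] [DecidableEq κ]
    {E : Type*} [NormedAddCommGroup E] [NormedSpace 𝕜 E] {f : (κ → 𝕜) → E} {f' : (κ → 𝕜) →L[𝕜] E}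
    {σ : 𝕜 → 𝕜} {σ' : 𝕜} {W : Matrix κ ι 𝕜} {a : ι → 𝕜} {i : ι}
    (hf : HasFDerivAt f f' (W *ᵥ (σ ∘ a))) (hσ : HasDerivAt σ σ' (a i)) :
    HasDerivAt (fun t ↦ f (W *ᵥ (σ ∘ Function.update a i t)))
      (∑ k, (W k i * σ') • f' (Pi.single k 1)) (a i) := by
  have hcolumn : W *ᵥ Pi.single i σ' = fun k ↦ W k i * σ' :=
    funext fun k ↦ dotProduct_single (W k) σ' i
  have hlayer : HasDerivAt (fun t ↦ W *ᵥ (σ ∘ Function.update a i t))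
      (fun k ↦ W k i * σ') (a i) :=
    hcolumn ▸ hasDerivAt_const_mulVec W (hasDerivAt_comp_update hσ)
  rw [← map_eq_sum_smul_map_single f' fun k ↦ W k i * σ']
  exact hf.comp_hasDerivAt_of_eq (a i) hlayer (by rw [Function.update_eq_self])

end Layer

theorem backprop_activation_input (m n : ℕ) (f : (Fin m → ℝ) → ℝ) (σ : ℝ → ℝ)
    (hf : Differentiable ℝ f) (hσ : Differentiable ℝ σ)
    (W : Matrix (Fin m) (Fin n) ℝ) :
    ∀ (a : Fin n → ℝ) (i : Fin n),
      deriv (fun t : ℝ => f (W.mulVec (fun i' => σ (Function.update a i t i')))) (a i) =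
        ∑ k : Fin m, ((fderiv ℝ f (W.mulVec (fun i' => σ (a i')))) (Pi.single k 1))
          * (W k i) * (deriv σ (a i)) := by
  intro a i
  have hderiv := (backprop_activation_input_general (W := W) (hf _).hasFDerivAt
    (hσ (a i)).hasDerivAt).deriv
  simpa only [Function.comp_def, smul_eq_mul, mul_comm, mul_left_comm, mul_assoc] using hderiv
end

section
/- Let f : (Fin m → ℝ) → ℝ be differentiable, h : Fin n → ℝ, W : Matrix (Fin m) (Fin n) ℝ, i : Fin m, j : Fin n. Then deriv (fun t => f ((W.updateRow i (Function.update (W i) j t)).mulVec h)) (W i j) = ((fderiv ℝ f (W.mulVec h)) (Pi.single i 1)) * (h j). -/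
open scoped Matrix

lemma update_eq_single_sub_add {ι : Type*} [DecidableEq ι] {G : ι → Type*} [∀ i, AddGroup (G i)]
    (u : ∀ i, G i) (i : ι) (a : G i) : Function.update u i a = Pi.single i (a - u i) + u := by
  ext k
  obtain rfl | hk := eq_or_ne k i
  · simp
  · simp [hk]

lemma update_dotProduct {n R : Type*} [Fintype n] [DecidableEq n] [NonUnitalNonAssocRing R]
    (u v : n → R) (j : n) (t : R) :
    Function.update u j t ⬝ᵥ v = (t - u j) * v j + u ⬝ᵥ v := by
  rw [update_eq_single_sub_add, add_dotProduct, single_dotProduct]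

lemma updateRow_update_mulVec {m n R : Type*} [DecidableEq m] [Fintype n] [DecidableEq n]
    [NonUnitalNonAssocRing R] (W : Matrix m n R) (h : n → R) (i : m) (j : n) (t : R) :
    W.updateRow i (Function.update (W i) j t) *ᵥ h =
      Pi.single i ((t - W i j) * h j) + W *ᵥ h := by
  rw [Matrix.updateRow_mulVec, update_dotProduct, update_eq_single_sub_add (W *ᵥ h),
    Matrix.mulVec, add_sub_cancel_right]

theorem backprop_weight_gradient_general {𝕜 F m n : Type*} [NontriviallyNormedField 𝕜]
    [NormedAddCommGroup F] [NormedSpace 𝕜 F] [DecidableEq m] [Fintype n] [DecidableEq n]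
    {f : (m → 𝕜) → F} {f' : F} {W : Matrix m n 𝕜} {h : n → 𝕜} {i : m} (j : n)
    (hf : HasLineDerivAt 𝕜 f f' (W *ᵥ h) (Pi.single i 1)) :
    HasDerivAt (fun t : 𝕜 => f (W.updateRow i (Function.update (W i) j t) *ᵥ h))
      (h j • f') (W i j) := by
  have mulVec_eq (t : 𝕜) : W.updateRow i (Function.update (W i) j t) *ᵥ h =
      W *ᵥ h + ((t - W i j) * h j) • Pi.single i 1 := by
    rw [updateRow_update_mulVec, add_comm, ← Pi.single_smul, smul_eq_mul, mul_one]
  have hasDerivAt_displacement :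
      HasDerivAt (fun t : 𝕜 => (t - W i j) * h j) (h j) (W i j) := by
    simpa only [one_mul] using ((hasDerivAt_id' (W i j)).sub_const (W i j)).mul_const (h j)
  simp only [mulVec_eq]
  exact HasDerivAt.scomp_of_eq (W i j) hf hasDerivAt_displacement (by rw [sub_self, zero_mul])

theorem backprop_weight_gradient (m n : ℕ) (f : (Fin m → ℝ) → ℝ) (hf : Differentiable ℝ f)
    (h : Fin n → ℝ) (W : Matrix (Fin m) (Fin n) ℝ) (i : Fin m) (j : Fin n) :
    deriv (fun t : ℝ => f ((W.updateRow i (Function.update (W i) j t)).mulVec h)) (W i j) =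
      ((fderiv ℝ f (W.mulVec h)) (Pi.single i 1)) * (h j) := by
  have hline := (hf (W.mulVec h)).hasFDerivAt.hasLineDerivAt (Pi.single i 1)
  rw [(backprop_weight_gradient_general j hline).deriv, smul_eq_mul, mul_comm]
end

section
/- Let f : (Fin m → ℝ) → ℝ be twice continuously differentiable, σ : ℝ → ℝ be twice continuously differentiable, and W : Matrix (Fin m) (Fin n) ℝ. Suppose the off-diagonal second derivatives of f vanish everywhere: for all x : Fin m → ℝ and all k k' : Fin m with k ≠ k', (fderiv ℝ (fun y => (fderiv ℝ f y) (Pi.single k' 1)) x) (Pi.single k 1) = 0. Define g : (Fin n → ℝ) → ℝ by g a = f (W.mulVec (fun i' => σ (a i'))). Then for every a : Fin n → ℝ and i : Fin n, writing z = W.mulVec (fun i' => σ (a i')), deriv (deriv (fun t => g (Function.update a i t))) (a i) = ∑ k : Fin m, ( ((fderiv ℝ (fun y => (fderiv ℝ f y) (Pi.single k 1)) z) (Pi.single k 1)) * (W k i)^2 * (deriv σ (a i))^2 + ((fderiv ℝ f z) (Pi.single k 1)) * (W k i) * (deriv (deriv σ) (a i)) ). -/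
/-!
A coordinate slice of a layer, `t ↦ W *ᵥ (σ ∘ Function.update a i t)`, is a curve moving along the
single column `W.col i`, with velocity `σ' t • W.col i` and acceleration `σ'' t • W.col i`. The
second-order chain rule splits the second derivative of the loss along it into a Hessian term,
quadratic in the velocity, and a gradient term, linear in the acceleration. A diagonal Hessian turns
the quadratic term into a weighted sum of squares of the entries of the column.
-/

open Function
open scoped Matrix Topology

section LinearAlgebra

variable {R ι : Type*} [Fintype ι]

theorem apply_self_eq_sum_of_isOrthoᵢ_basis {M N : Type*} [CommSemiring R] [AddCommMonoid M]
    [Module R M] [AddCommMonoid N] [Module R N] {B : M →ₗ[R] M →ₗ[R] N} {b : Module.Basis ι R M}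
    (hB : B.IsOrthoᵢ b) (x : M) :
    B x x = ∑ k, b.repr x k ^ 2 • B (b k) (b k) := by
  have h_row (k : ι) : B (b k) x = b.repr x k • B (b k) (b k) := by
    conv_lhs => rw [← b.sum_repr x, map_sum]
    rw [Fintype.sum_eq_single k fun j hj => by rw [map_smul, hB hj.symm, smul_zero], map_smul]
  calc B x x = ∑ k, b.repr x k • B (b k) x := by
        conv_lhs => enter [1]; rw [← b.sum_repr x]
        simp only [map_sum, map_smul, LinearMap.sum_apply, LinearMap.smul_apply]
    _ = ∑ k, b.repr x k ^ 2 • B (b k) (b k) := by simp only [h_row, smul_smul, sq]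

theorem mulVec_update {κ : Type*} [CommRing R] [DecidableEq ι] (W : Matrix κ ι R) (v : ι → R)
    (i : ι) (s : R) : W *ᵥ update v i s = W *ᵥ v + (s - v i) • W.col i := by
  have h_update : update v i s = v + (s - v i) • Pi.single i 1 := by
    ext j
    obtain rfl | hj := eq_or_ne j i <;> simp [*]
  rw [h_update, Matrix.mulVec_add, Matrix.mulVec_smul, Matrix.mulVec_single_one]

end LinearAlgebra

section Calculus

variable {𝕜 : Type*} [NontriviallyNormedField 𝕜]
  {E : Type*} [NormedAddCommGroup E] [NormedSpace 𝕜 E]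
  {F : Type*} [NormedAddCommGroup F] [NormedSpace 𝕜 F]
  {ι κ : Type*} [Fintype ι] [DecidableEq ι]

theorem fderiv_fderiv_apply_const {f : E → F} {x : E} (hf : DifferentiableAt 𝕜 (fderiv 𝕜 f) x)
    (v w : E) : fderiv 𝕜 (fun y => fderiv 𝕜 f y v) x w = fderiv 𝕜 (fderiv 𝕜 f) x w v := by
  simp [fderiv_clm_apply hf (differentiableAt_const v)]

theorem fderiv_fderiv_apply_self_eq_sum_of_offDiag_eq_zero [Fintype κ] [DecidableEq κ]
    {f : (κ → 𝕜) → F} {z : κ → 𝕜} (hf : DifferentiableAt 𝕜 (fderiv 𝕜 f) z)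
    (hoff : ∀ k k' : κ, k ≠ k' →
      fderiv 𝕜 (fun y => fderiv 𝕜 f y (Pi.single k' 1)) z (Pi.single k 1) = 0)
    (v : κ → 𝕜) :
    fderiv 𝕜 (fderiv 𝕜 f) z v v =
      ∑ k, v k ^ 2 • fderiv 𝕜 (fun y => fderiv 𝕜 f y (Pi.single k 1)) z (Pi.single k 1) := by
  simp only [fderiv_fderiv_apply_const hf] at hoff ⊢
  have h_ortho : (fderiv 𝕜 (fderiv 𝕜 f) z).toLinearMap₁₂.IsOrthoᵢ (Pi.basisFun 𝕜 κ) :=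
    LinearMap.isOrthoᵢ_def.2 fun k k' hk => by simpa using hoff k k' hk
  simpa using apply_self_eq_sum_of_isOrthoᵢ_basis h_ortho v

theorem hasDerivAt_deriv_comp {f : E → F} {c c' : 𝕜 → E} {c'' : E} {t : 𝕜}
    (hf : ∀ᶠ x in 𝓝 (c t), DifferentiableAt 𝕜 f x)
    (hf' : DifferentiableAt 𝕜 (fderiv 𝕜 f) (c t))
    (hc : ∀ᶠ s in 𝓝 t, HasDerivAt c (c' s) s) (hc' : HasDerivAt c' c'' t) :
    HasDerivAt (deriv (f ∘ c))
      (fderiv 𝕜 (fderiv 𝕜 f) (c t) (c' t) (c' t) + fderiv 𝕜 f (c t) c'') t := by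
  have hct : HasDerivAt c (c' t) t := hc.self_of_nhds
  have h_deriv : deriv (f ∘ c) =ᶠ[𝓝 t] fun s => fderiv 𝕜 f (c s) (c' s) := by
    filter_upwards [hct.continuousAt.eventually hf, hc] with s hfs hcs
    exact (hfs.hasFDerivAt.comp_hasDerivAt s hcs).deriv
  exact ((hf'.hasFDerivAt.comp_hasDerivAt t hct).clm_apply hc').congr_of_eventuallyEq h_deriv

theorem hasDerivAt_mulVec_comp_update [Finite κ] {σ : 𝕜 → 𝕜} {σ' t : 𝕜} (hσ : HasDerivAt σ σ' t)
    (W : Matrix κ ι 𝕜) (a : ι → 𝕜) (i : ι) :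
    HasDerivAt (fun s => W *ᵥ (σ ∘ update a i s)) (σ' • W.col i) t := by
  cases nonempty_fintype κ
  simp only [comp_update, mulVec_update]
  exact ((hσ.sub_const _).smul_const (W.col i)).const_add _

theorem hesscale_diagonal_recursion_general [Fintype κ] [DecidableEq κ] {f : (κ → 𝕜) → 𝕜}
    {σ : 𝕜 → 𝕜} (W : Matrix κ ι 𝕜) (a : ι → 𝕜) (i : ι)
    (hf : ∀ᶠ x in 𝓝 (W *ᵥ (σ ∘ a)), DifferentiableAt 𝕜 f x)
    (hf' : DifferentiableAt 𝕜 (fderiv 𝕜 f) (W *ᵥ (σ ∘ a)))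
    (hσ : ∀ᶠ t in 𝓝 (a i), DifferentiableAt 𝕜 σ t) (hσ' : DifferentiableAt 𝕜 (deriv σ) (a i))
    (hoff : ∀ k k' : κ, k ≠ k' →
      fderiv 𝕜 (fun y => fderiv 𝕜 f y (Pi.single k' 1)) (W *ᵥ (σ ∘ a)) (Pi.single k 1) = 0) :
    HasDerivAt (deriv fun t => f (W *ᵥ (σ ∘ update a i t)))
      (∑ k, (fderiv 𝕜 (fun y => fderiv 𝕜 f y (Pi.single k 1)) (W *ᵥ (σ ∘ a)) (Pi.single k 1)
          * W k i ^ 2 * deriv σ (a i) ^ 2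
        + fderiv 𝕜 f (W *ᵥ (σ ∘ a)) (Pi.single k 1) * W k i * deriv (deriv σ) (a i))) (a i) := by
  set z := W *ᵥ (σ ∘ a)
  have hc_self : W *ᵥ (σ ∘ update a i (a i)) = z := by rw [update_eq_self]
  have hc : ∀ᶠ t in 𝓝 (a i),
      HasDerivAt (fun s => W *ᵥ (σ ∘ update a i s)) (deriv σ t • W.col i) t :=
    hσ.mono fun t ht => hasDerivAt_mulVec_comp_update ht.hasDerivAt W a i
  have h_chain := hasDerivAt_deriv_comp (f := f) (by rwa [hc_self]) (by rwa [hc_self]) hc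
    (hσ'.hasDerivAt.smul_const (W.col i))
  have h_hessian := fderiv_fderiv_apply_self_eq_sum_of_offDiag_eq_zero hf' hoff (W.col i)
  have h_gradient : fderiv 𝕜 f z (W.col i) = ∑ k, W k i * fderiv 𝕜 f z (Pi.single k 1) := by
    conv_lhs => rw [pi_eq_sum_univ' (W.col i)]
    simp
  convert! h_chain using 1
  simp only [hc_self, map_smul, smul_apply, smul_eq_mul, h_hessian, h_gradient, Matrix.col_apply,
    Finset.mul_sum, ← Finset.sum_add_distrib]
  exact Finset.sum_congr rfl fun k _ => by ring

end Calculus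

theorem hesscale_diagonal_recursion (m n : ℕ) (f : (Fin m → ℝ) → ℝ) (σ : ℝ → ℝ)
    (hf : ContDiff ℝ 2 f) (hσ : ContDiff ℝ 2 σ)
    (hoff : ∀ (x : Fin m → ℝ) (k k' : Fin m), k ≠ k' →
      (fderiv ℝ (fun y => (fderiv ℝ f y) (Pi.single k' 1)) x) (Pi.single k 1) = 0)
    (W : Matrix (Fin m) (Fin n) ℝ) :
    ∀ (a : Fin n → ℝ) (i : Fin n),
      deriv (deriv (fun t : ℝ => f (W.mulVec (fun i' => σ (Function.update a i t i'))))) (a i) =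
        ∑ k : Fin m,
          (((fderiv ℝ (fun y => (fderiv ℝ f y) (Pi.single k 1))
              (W.mulVec (fun i' => σ (a i')))) (Pi.single k 1))
            * (W k i)^2 * (deriv σ (a i))^2
          + ((fderiv ℝ f (W.mulVec (fun i' => σ (a i')))) (Pi.single k 1))
            * (W k i) * (deriv (deriv σ) (a i))) :=
  fun a i => (hesscale_diagonal_recursion_general W a i
    (.of_forall (hf.differentiable two_ne_zero))
    ((hf.fderiv_right (m := 1) le_rfl).differentiable one_ne_zero _)
    (.of_forall (hσ.differentiable two_ne_zero)) (hσ.differentiable_deriv_two _) (hoff _)).deriv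
end

section
/- Let f : (Fin m → ℝ) → ℝ, σ : ℝ → ℝ with σ 0 = 0, W : Matrix (Fin m) (Fin n) ℝ, a : Fin n → ℝ, and j : Fin n. Define g : (Fin n → ℝ) → ℝ by g a' = f (W.mulVec (fun i => σ (a' i))) and the slice φ : ℝ → ℝ by φ t = g (Function.update a j t). If φ is three times continuously differentiable with iteratedDeriv 3 φ identically zero, then f (W.mulVec (Function.update (fun i => σ (a i)) j 0)) - g a = -(deriv φ (a j)) * (a j) + (1/2) * (deriv (deriv φ) (a j)) * (a j)^2. -/
/-!
As `σ 0 = 0`, zeroing the activation output of feature `j` amounts to moving the slice variable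
from `a j` to `0`, so the utility is the increment of the slice between these two points. This
increment is read off the second-order Taylor polynomial of the slice at `a j`, which is exact:
the derivative of an `n`-th order Taylor polynomial with respect to its *centre* is a multiple of
the `(n + 1)`-st derivative of the function.
-/

open Function Set

section Taylor

variable {E : Type*} [NormedAddCommGroup E] [NormedSpace ℝ E] {f : ℝ → E} {s : Set ℝ} {x₀ x : ℝ}

theorem taylorWithinEval_eq_of_iteratedDerivWithin_succ_eq_zero {n : ℕ} (hs : Convex ℝ s)
    (hs_unique : UniqueDiffOn ℝ s) (hf : ContDiffOn ℝ (n + 1) f s)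
    (hzero : ∀ t ∈ s, iteratedDerivWithin (n + 1) f s t = 0) (hx₀ : x₀ ∈ s) (hx : x ∈ s) :
    taylorWithinEval f n s x₀ x = f x := by
  have hdiff : DifferentiableOn ℝ (iteratedDerivWithin n f s) s :=
    hf.differentiableOn_iteratedDerivWithin (by norm_cast; exact n.lt_succ_self) hs_unique
  have hcentre : ∀ t ∈ s, HasDerivWithinAt (fun c ↦ taylorWithinEval f n s c x) 0 s t := by
    intro t ht
    simpa only [hzero t ht, smul_zero] using hasDerivWithinAt_taylorWithinEval (x := x)
      hs_unique self_mem_nhdsWithin ht Subset.rfl (hf.of_le le_self_add) (hdiff t ht)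
  have hconst : taylorWithinEval f n s x₀ x = taylorWithinEval f n s x x :=
    hs.is_const_of_fderivWithin_eq_zero (𝕜 := ℝ)
      (fun t ht ↦ (hcentre t ht).differentiableWithinAt)
      (fun t ht ↦ by simpa using (hcentre t ht).hasFDerivWithinAt.fderivWithin (hs_unique t ht))
      hx₀ hx
  rw [hconst, taylorWithinEval_self]

theorem sub_eq_of_iteratedDeriv_three_eq_zero (hs : Convex ℝ s) (hs_open : IsOpen s)
    (hf : ContDiffOn ℝ 3 f s) (hzero : ∀ t ∈ s, iteratedDeriv 3 f t = 0)
    (hx₀ : x₀ ∈ s) (hx : x ∈ s) :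
    f x - f x₀ = (x - x₀) • deriv f x₀ + ((1 / 2) * (x - x₀) ^ 2) • deriv (deriv f) x₀ := by
  have htaylor : taylorWithinEval f 2 s x₀ x = f x :=
    taylorWithinEval_eq_of_iteratedDerivWithin_succ_eq_zero hs hs_open.uniqueDiffOn
      (by exact_mod_cast hf)
      (fun t ht ↦ (iteratedDerivWithin_of_isOpen hs_open ht).trans (hzero t ht)) hx₀ hx
  rw [← htaylor, taylor_within_apply]
  simp [Finset.sum_range_succ, iteratedDerivWithin_of_isOpen hs_open hx₀, iteratedDeriv_succ,
    add_assoc]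

end Taylor

section FeatureSlice

variable {ι α β E : Type*} [DecidableEq ι]

/-- The slice of a loss along feature `j`: the loss `L`, taken as a function of the activation
outputs `σ ∘ a` of a layer, when the activation input `a j` is replaced by `t`. The weight matrix
and all later layers are absorbed into `L`. -/
def featureSlice (L : (ι → β) → E) (σ : α → β) (a : ι → α) (j : ι) (t : α) : E :=
  L (σ ∘ update a j t)

theorem featureSlice_self (L : (ι → β) → E) (σ : α → β) (a : ι → α) (j : ι) :
    featureSlice L σ a j (a j) = L (σ ∘ a) := by
  rw [featureSlice, update_eq_self]

theorem featureSlice_zero [Zero α] [Zero β] (L : (ι → β) → E) {σ : α → β} (hσ : σ 0 = 0)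
    (a : ι → α) (j : ι) : featureSlice L σ a j 0 = L (update (σ ∘ a) j 0) := by
  rw [featureSlice, comp_update, hσ]

theorem origin_passing_feature_utility_general [Zero β] [NormedAddCommGroup E] [NormedSpace ℝ E]
    (L : (ι → β) → E) {σ : ℝ → β} (hσ : σ 0 = 0) (a : ι → ℝ) (j : ι) {s : Set ℝ}
    (hs : Convex ℝ s) (hs_open : IsOpen s) (h0 : 0 ∈ s) (haj : a j ∈ s)
    (hφ : ContDiffOn ℝ 3 (featureSlice L σ a j) s)
    (h3 : ∀ t ∈ s, iteratedDeriv 3 (featureSlice L σ a j) t = 0) :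
    L (update (σ ∘ a) j 0) - L (σ ∘ a) =
      -(a j • deriv (featureSlice L σ a j) (a j)) +
        ((1 / 2) * a j ^ 2) • deriv (deriv (featureSlice L σ a j)) (a j) := by
  rw [← featureSlice_zero L hσ, ← featureSlice_self L σ a j,
    sub_eq_of_iteratedDeriv_three_eq_zero hs hs_open hφ h3 haj h0, zero_sub, neg_smul, neg_sq]

end FeatureSlice

theorem origin_passing_feature_utility (m n : ℕ) (f : (Fin m → ℝ) → ℝ) (σ : ℝ → ℝ)
    (hσ : σ 0 = 0) (W : Matrix (Fin m) (Fin n) ℝ) (a : Fin n → ℝ) (j : Fin n)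
    (hφ : ContDiff ℝ 3
      (fun t : ℝ => f (W.mulVec (fun i => σ (Function.update a j t i)))))
    (h3 : ∀ t : ℝ, iteratedDeriv 3
      (fun t : ℝ => f (W.mulVec (fun i => σ (Function.update a j t i)))) t = 0) :
    f (W.mulVec (Function.update (fun i => σ (a i)) j 0))
        - f (W.mulVec (fun i => σ (a i))) =
      -(deriv (fun t : ℝ => f (W.mulVec (fun i => σ (Function.update a j t i)))) (a j)) * (a j)
        + (1/2) * (deriv (deriv
            (fun t : ℝ => f (W.mulVec (fun i => σ (Function.update a j t i))))) (a j))
          * (a j)^2 := by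
  refine (origin_passing_feature_utility_general (f <| W.mulVec ·) hσ a j convex_univ isOpen_univ
    (mem_univ 0) (mem_univ (a j)) hφ.contDiffOn fun t _ ↦ h3 t).trans ?_
  simp only [featureSlice.eq_unfold, comp_def, smul_eq_mul]
  ring
end
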